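/- Let A ∈ ℝ^{p×p}, G ∈ ℝ^{p×m}, and let H ∈ ℝ^{m×m} be a reflexive generalized inverse of GᵀG, i.e. (GᵀG)H(GᵀG) = GᵀG and H(GᵀG)H = H. Set Π = G H Gᵀ and Γ̂ = Π ((A + Aᵀ)/2) Π. Then Γ̂ belongs to S(G) = {G Ψ Gᵀ : Ψ ∈ ℝ^{m×m} symmetric} and achieves the infimum of ‖A − Γ‖ over Γ ∈ S(G), i.e. ‖A − Γ̂‖ ≤ ‖A − G Ψ Gᵀ‖ for every symmetric Ψ ∈ ℝ^{m×m}. -/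

import Mathlib

/-!
The matrix `Π = G H Gᵀ` is the orthogonal projection onto the column space of `G`: the identity
`GᵀG H GᵀG = GᵀG` gives `Π G = G` after cancelling `Gᵀ` (`proj_mul_self`), whence `Π Πᵀ = Πᵀ`, so
`Π` is symmetric even when `H` is not (`proj_transpose`). Hence `Γ̂ = Π S Π`, with `S` the symmetric
part of `A`, is of the form `G Ψ Gᵀ` with `Ψ` symmetric. Every `D = G Φ Gᵀ` satisfies `Π D Π = D`,
so for symmetric `D`, `⟨A, D⟩ = ⟨S, D⟩ = ⟨Γ̂, D⟩` (`inner_residual_eq_zero`). The residual `A - Γ̂` is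
therefore orthogonal to `S(G)`, and Pythagoras (`frobNorm_le_add`) gives minimality.
-/

open Matrix

/-- Frobenius norm of a matrix: `‖A‖ = √(tr (A Aᵀ))`. -/
noncomputable def frobNorm {a : Type*} [Fintype a] (A : Matrix a a ℝ) : ℝ :=
  Real.sqrt (Matrix.trace (A * Aᵀ))

theorem proj_mul_self {p m : ℕ} {G : Matrix (Fin p) (Fin m) ℝ} {H : Matrix (Fin m) (Fin m) ℝ}
    (hH : (Gᵀ * G) * H * (Gᵀ * G) = Gᵀ * G) : G * H * Gᵀ * G = G := by
  have h0 : Gᴴ * G * (H * (Gᵀ * G) - 1) = 0 := by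
    rw [conjTranspose_eq_transpose_of_trivial, Matrix.mul_sub, ← Matrix.mul_assoc, hH,
      Matrix.mul_one, sub_self]
  have h1 := (conjTranspose_mul_self_mul_eq_zero G _).1 h0
  rw [Matrix.mul_sub, Matrix.mul_one, sub_eq_zero] at h1
  simpa only [Matrix.mul_assoc] using h1

theorem proj_transpose {p m : ℕ} {G : Matrix (Fin p) (Fin m) ℝ} {H : Matrix (Fin m) (Fin m) ℝ}
    (hG : G * H * Gᵀ * G = G) : (G * H * Gᵀ)ᵀ = G * H * Gᵀ := by
  have h : (G * H * Gᵀ) * (G * H * Gᵀ)ᵀ = (G * H * Gᵀ)ᵀ := by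
    have e : (G * H * Gᵀ)ᵀ = G * (Hᵀ * Gᵀ) := by
      simp only [transpose_mul, transpose_transpose]
    rw [e, ← Matrix.mul_assoc, hG]
  have h2 := congrArg transpose h
  rw [transpose_mul, transpose_transpose, h] at h2
  exact h2

/-- If `P D P = D` and `D` is symmetric, then `A` minus the compression by `P` of its symmetric part
is orthogonal to `D`. -/
theorem inner_residual_eq_zero {p : ℕ} (A P D : Matrix (Fin p) (Fin p) ℝ)
    (hD : Dᵀ = D) (hP : P * D * P = D) :
    trace ((A - P * ((1 / 2 : ℝ) • (A + Aᵀ)) * P) * Dᵀ) = 0 := by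
  have h1 : trace (Aᵀ * D) = trace (A * D) := by
    rw [← trace_transpose, transpose_mul, transpose_transpose, hD, trace_mul_comm]
  have h2 : trace (P * ((1 / 2 : ℝ) • (A + Aᵀ)) * P * D)
      = trace ((1 / 2 : ℝ) • (A + Aᵀ) * D) := by
    conv_rhs => rw [← hP]
    rw [Matrix.mul_assoc, Matrix.mul_assoc, trace_mul_comm]
    simp only [Matrix.mul_assoc]
  rw [hD, Matrix.sub_mul, trace_sub, h2, Matrix.smul_mul, trace_smul, Matrix.add_mul, trace_add,
    h1, smul_eq_mul]
  ring

theorem frobNorm_le_add {p : ℕ} (E D : Matrix (Fin p) (Fin p) ℝ) (h : trace (E * Dᵀ) = 0) :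
    frobNorm E ≤ frobNorm (E + D) := by
  have h' : trace (D * Eᵀ) = 0 := by
    rw [← trace_transpose, transpose_mul, transpose_transpose, h]
  have hD : 0 ≤ trace (D * Dᵀ) := by
    have := (posSemidef_self_mul_conjTranspose D).trace_nonneg
    rwa [conjTranspose_eq_transpose_of_trivial] at this
  apply Real.sqrt_le_sqrt
  simp only [transpose_add, Matrix.add_mul, Matrix.mul_add, trace_add]
  linarith

/-- Let `H` be a reflexive generalized inverse of `GᵀG` and `Π = G H Gᵀ`.
Then `Γ̂ = Π ((A + Aᵀ)/2) Π` belongs to `S(G) = {G Ψ Gᵀ : Ψ symmetric}`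
and minimizes the Frobenius distance `‖A − Γ‖` over `Γ ∈ S(G)`. -/
theorem projection_onto_SG {p m : ℕ}
    (A : Matrix (Fin p) (Fin p) ℝ) (G : Matrix (Fin p) (Fin m) ℝ)
    (H : Matrix (Fin m) (Fin m) ℝ)
    (hH₁ : (Gᵀ * G) * H * (Gᵀ * G) = Gᵀ * G)
    (hH₂ : H * (Gᵀ * G) * H = H) :
    (∃ Ψ : Matrix (Fin m) (Fin m) ℝ, Ψᵀ = Ψ ∧
      (G * H * Gᵀ) * ((1 / 2 : ℝ) • (A + Aᵀ)) * (G * H * Gᵀ) = G * Ψ * Gᵀ) ∧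
    (∀ Ψ : Matrix (Fin m) (Fin m) ℝ, Ψᵀ = Ψ →
      frobNorm (A - (G * H * Gᵀ) * ((1 / 2 : ℝ) • (A + Aᵀ)) * (G * H * Gᵀ)) ≤
        frobNorm (A - G * Ψ * Gᵀ)) := by
  have hG := proj_mul_self hH₁
  have hT := proj_transpose hG
  have hG' : Gᵀ * (G * H * Gᵀ) = Gᵀ := by
    have h := congrArg transpose hG
    rwa [transpose_mul, hT] at h
  have hmem : ∃ Ψ : Matrix (Fin m) (Fin m) ℝ, Ψᵀ = Ψ ∧
      (G * H * Gᵀ) * ((1 / 2 : ℝ) • (A + Aᵀ)) * (G * H * Gᵀ) = G * Ψ * Gᵀ := by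
    -- Writing the right-hand factor `Π` as `Πᵀ` makes the middle matrix visibly symmetric.
    refine ⟨H * Gᵀ * ((1 / 2 : ℝ) • (A + Aᵀ)) * G * Hᵀ, ?_, ?_⟩
    · simp only [transpose_mul, transpose_transpose, transpose_smul, transpose_add,
        Matrix.mul_assoc, add_comm]
    · conv_lhs => arg 2; rw [← hT]
      simp only [transpose_mul, transpose_transpose, Matrix.mul_assoc]
  refine ⟨hmem, fun Ψ hΨ => ?_⟩
  obtain ⟨Φ, hΦ, hE⟩ := hmem
  have hsum : A - G * Ψ * Gᵀ = (A - (G * H * Gᵀ) * ((1 / 2 : ℝ) • (A + Aᵀ)) * (G * H * Gᵀ))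
      + G * (Φ - Ψ) * Gᵀ := by
    rw [hE, Matrix.mul_sub, Matrix.sub_mul]
    abel
  rw [hsum]
  apply frobNorm_le_add
  apply inner_residual_eq_zero
  · simp only [transpose_mul, transpose_transpose, transpose_sub, hΦ, hΨ, Matrix.mul_assoc]
  · calc (G * H * Gᵀ) * (G * (Φ - Ψ) * Gᵀ) * (G * H * Gᵀ)
        = (G * H * Gᵀ * G) * (Φ - Ψ) * (Gᵀ * (G * H * Gᵀ)) := by
          simp only [Matrix.mul_assoc]
      _ = G * (Φ - Ψ) * Gᵀ := by rw [hG, hG']
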